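/- Let s ≥ 1. There exists a constant C = C(s) > 0 such that for every N > 1 and all integers n₁,…,n₆ satisfying n₁ − n₂ + n₃ − n₄ + n₅ − n₆ = 0, |n₁| ≥ |n₂| ≥ |n₃| ≥ |n₄| ≥ |n₅| ≥ |n₆|, n₁ ≠ 0, and |n_j| ≤ |n₁|^{1/2} for j = 3,4,5,6, one has |(θ(n₁))² − (θ(n₂))² + (θ(n₃))² − (θ(n₄))² + (θ(n₅))² − (θ(n₆))²| ≤ C |n₁|^{−1/2} θ(n₁) θ(n₂). -/

import Mathlib

open MeasureTheory Filter

noncomputable section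

/-- Fourier coefficient on `S¹ = ℝ/2πℤ` (functions on `S¹` are modeled as `2π`-periodic
functions `ℝ → ℂ`): `f̂(n) = ∫_{S¹} f(x) e^{-inx} dx`. -/
def fourierCoef (f : ℝ → ℂ) (n : ℤ) : ℂ :=
  ∫ x in (0:ℝ)..(2 * Real.pi), f x * Complex.exp (-Complex.I * (n : ℂ) * (x : ℂ))

/-- The Sobolev `H^σ` norm: `(∑_n ⟨n⟩^{2σ} |f̂(n)|²)^{1/2}`, with `⟨n⟩^{2σ} = (1+n²)^σ`. -/
def sobolevNorm (σ : ℝ) (f : ℝ → ℂ) : ℝ :=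
  (∑' n : ℤ, (1 + (n : ℝ) ^ 2) ^ σ * ‖fourierCoef f n‖ ^ 2) ^ (1/2 : ℝ)

/-- `f` is a function on `S¹`, i.e. `2π`-periodic. -/
def Periodic2pi (f : ℝ → ℂ) : Prop := ∀ x, f (x + 2 * Real.pi) = f x

/-- Membership in `H^σ(S¹)`. -/
def InHs (σ : ℝ) (f : ℝ → ℂ) : Prop :=
  Periodic2pi f ∧ Summable (fun n : ℤ => (1 + (n : ℝ) ^ 2) ^ σ * ‖fourierCoef f n‖ ^ 2)

/-- The `L²(S¹)` norm. -/
def L2norm (f : ℝ → ℂ) : ℝ := (∫ x in (0:ℝ)..(2 * Real.pi), ‖f x‖ ^ 2) ^ (1/2 : ℝ)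

/-- The mass `M(f) = ∫_{S¹} |f|² dx`. -/
def massQ (f : ℝ → ℂ) : ℝ := ∫ x in (0:ℝ)..(2 * Real.pi), ‖f x‖ ^ 2

/-- Convolution on `S¹`: `(V∗g)(x) = ∫_{S¹} V(x-y) g(y) dy`. -/
def convP (V : ℝ → ℝ) (g : ℝ → ℂ) (x : ℝ) : ℂ :=
  ∫ y in (0:ℝ)..(2 * Real.pi), (V (x - y) : ℂ) * g y

/-- The `L¹(S¹)` norm of a real-valued `V`. -/
def L1normR (V : ℝ → ℝ) : ℝ := ∫ x in (0:ℝ)..(2 * Real.pi), |V x|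

/-- Spacetime Fourier transform `ũ(n,τ) = ∫_{S¹}∫_ℝ u(x,t) e^{-inx-itτ} dt dx`
(for `u : ℝ → ℝ → ℂ`, time ↦ space ↦ value, `2π`-periodic in space). -/
def spacetimeFourier (u : ℝ → ℝ → ℂ) (n : ℤ) (τ : ℝ) : ℂ :=
  ∫ t : ℝ, ∫ x in (0:ℝ)..(2 * Real.pi),
    u t x * Complex.exp (-Complex.I * ((n : ℂ) * (x : ℂ) + (τ : ℂ) * (t : ℂ)))

/-- The `X^{s,b}` norm: `(∑_n ∫ |ũ(n,τ)|² ⟨n⟩^{2s} ⟨τ-n²⟩^{2b} dτ)^{1/2}`. -/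
def Xnorm (s b : ℝ) (u : ℝ → ℝ → ℂ) : ℝ :=
  (∑' n : ℤ, ∫ τ : ℝ, ‖spacetimeFourier u n τ‖ ^ 2 * (1 + (n : ℝ) ^ 2) ^ s *
    (1 + (τ - (n : ℝ) ^ 2) ^ 2) ^ b) ^ (1/2 : ℝ)

/-- Finiteness of the `X^{s,b}` norm. -/
def XMem (s b : ℝ) (u : ℝ → ℝ → ℂ) : Prop :=
  (∀ n : ℤ, Integrable (fun τ : ℝ => ‖spacetimeFourier u n τ‖ ^ 2 * (1 + (n : ℝ) ^ 2) ^ s *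
    (1 + (τ - (n : ℝ) ^ 2) ^ 2) ^ b)) ∧
  Summable (fun n : ℤ => ∫ τ : ℝ, ‖spacetimeFourier u n τ‖ ^ 2 * (1 + (n : ℝ) ^ 2) ^ s *
    (1 + (τ - (n : ℝ) ^ 2) ^ 2) ^ b)

/-- The multiplier `θ : [0,∞) → ℝ`, `θ(x) = (x/N)^s` for `x ≥ N`, `θ(x) = 1` for `x ≤ N`. -/
def thetaR (s N x : ℝ) : ℝ := if N ≤ x then (x / N) ^ s else 1

/-- `θ(n) := θ(|n|)` for `n ∈ ℤ`. -/
def thetaZ (s N : ℝ) (n : ℤ) : ℝ := thetaR s N |(n : ℝ)|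

/-- `E¹(f) = ‖𝒟f‖²_{L²(S¹)}`, computed via Plancherel:
`‖𝒟f‖²_{L²} = (1/2π) ∑_n θ(n)² |f̂(n)|²`. -/
def E1 (s N : ℝ) (f : ℝ → ℂ) : ℝ :=
  (1 / (2 * Real.pi)) * ∑' n : ℤ, (thetaZ s N n) ^ 2 * ‖fourierCoef f n‖ ^ 2

/-- `‖𝒟f‖_{L²(S¹)}`. -/
def DL2 (s N : ℝ) (f : ℝ → ℂ) : ℝ := (E1 s N f) ^ (1/2 : ℝ)

/-- `‖𝒟u‖_{X^{0,b}}`, where `𝒟` is the Fourier multiplier with symbol `θ(n)`. -/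
def DXnorm (s N b : ℝ) (u : ℝ → ℝ → ℂ) : ℝ :=
  (∑' n : ℤ, ∫ τ : ℝ, (thetaZ s N n) ^ 2 * ‖spacetimeFourier u n τ‖ ^ 2 *
    (1 + (τ - (n : ℝ) ^ 2) ^ 2) ^ b) ^ (1/2 : ℝ)

/-- The Japanese bracket `⟨n⟩ = (1+|n|²)^{1/2}`. -/
def jb (n : ℤ) : ℝ := Real.sqrt (1 + (n : ℝ) ^ 2)

/-- The multiplier `Ψ` on `Γ₄` for the Hartree higher modified energy. -/
def PsiV (s N : ℝ) (V : ℝ → ℝ) (n₁ n₂ n₃ n₄ : ℤ) : ℂ :=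
  if n₁ ^ 2 - n₂ ^ 2 + n₃ ^ 2 - n₄ ^ 2 ≠ 0 then
    (((thetaZ s N n₁) ^ 2 - (thetaZ s N n₂) ^ 2 + (thetaZ s N n₃) ^ 2 - (thetaZ s N n₄) ^ 2 : ℝ) : ℂ) *
      fourierCoef (fun x => (V x : ℂ)) (n₃ + n₄) /
      ((n₁ ^ 2 - n₂ ^ 2 + n₃ ^ 2 - n₄ ^ 2 : ℤ) : ℂ)
  else 0

/-- The multiplier `Ψ₂` on `Γ₄` for the higher modified energy of the cubic NLS with potential. -/
def Psi2 (s N : ℝ) (n₁ n₂ n₃ n₄ : ℤ) : ℂ :=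
  if n₁ ^ 2 - n₂ ^ 2 + n₃ ^ 2 - n₄ ^ 2 ≠ 0 then
    (((thetaZ s N n₁) ^ 2 - (thetaZ s N n₂) ^ 2 + (thetaZ s N n₃) ^ 2 - (thetaZ s N n₄) ^ 2 : ℝ) : ℂ) /
      ((n₁ ^ 2 - n₂ ^ 2 + n₃ ^ 2 - n₄ ^ 2 : ℤ) : ℂ)
  else 0

/-- The quadrilinear functional `λ₄(M;f)`, summed over `Γ₄ = {n₁+n₂+n₃+n₄ = 0}`
(parametrized by `(n₁,n₂,n₃)`, with `n₄ = -(n₁+n₂+n₃)`). -/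
def lambda4 (M : ℤ → ℤ → ℤ → ℤ → ℂ) (f : ℝ → ℂ) : ℂ :=
  ∑' p : ℤ × ℤ × ℤ,
    M p.1 p.2.1 p.2.2 (-(p.1 + p.2.1 + p.2.2)) * fourierCoef f p.1 *
      (starRingEnd ℂ) (fourierCoef f (-p.2.1)) * fourierCoef f p.2.2 *
      (starRingEnd ℂ) (fourierCoef f (p.1 + p.2.1 + p.2.2))

/-- `u` is a (global-in-time) solution of the defocusing periodic NLS
`i∂_t u + ∂_x² u = |u|^{2k} u` on `S¹ × ℝ`. -/
def IsSolutionNLS (k : ℕ) (u : ℝ → ℝ → ℂ) : Prop :=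
  (∀ t, Periodic2pi (u t)) ∧
  ∀ t x, Complex.I * deriv (fun t' => u t' x) t + deriv (deriv (u t)) x =
    ((‖u t x‖ : ℝ) : ℂ) ^ (2 * k) * u t x

/-- The conserved energy for the degree `2k+1` NLS. -/
def energyNLS (k : ℕ) (f : ℝ → ℂ) : ℝ :=
  (1/2) * (∫ x in (0:ℝ)..(2 * Real.pi), ‖deriv f x‖ ^ 2) +
    (1 / (2 * (k : ℝ) + 2)) * (∫ x in (0:ℝ)..(2 * Real.pi), ‖f x‖ ^ (2 * k + 2))

/-- `u` is a (global-in-time) solution of the periodic Hartree equation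
`i∂_t u + ∂_x² u = (V∗|u|²)u` on `S¹ × ℝ`. -/
def IsSolutionHartree (V : ℝ → ℝ) (u : ℝ → ℝ → ℂ) : Prop :=
  (∀ t, Periodic2pi (u t)) ∧
  ∀ t x, Complex.I * deriv (fun t' => u t' x) t + deriv (deriv (u t)) x =
    convP V (fun y => ((‖u t y‖ ^ 2 : ℝ) : ℂ)) x * u t x

/-- The conserved energy for the Hartree equation. -/
def energyHartree (V : ℝ → ℝ) (f : ℝ → ℂ) : ℝ :=
  (1/2) * (∫ x in (0:ℝ)..(2 * Real.pi), ‖deriv f x‖ ^ 2) +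
    (1/4) * (∫ x in (0:ℝ)..(2 * Real.pi),
      (convP V (fun y => ((‖f y‖ ^ 2 : ℝ) : ℂ)) x).re * ‖f x‖ ^ 2)

/-- `u` is a (global-in-time) solution of the cubic NLS with potential
`i∂_t u + ∂_x² u = |u|²u + λ(x)u` on `S¹ × ℝ`. -/
def IsSolutionPotNLS (lam : ℝ → ℝ) (u : ℝ → ℝ → ℂ) : Prop :=
  (∀ t, Periodic2pi (u t)) ∧
  ∀ t x, Complex.I * deriv (fun t' => u t' x) t + deriv (deriv (u t)) x =
    ((‖u t x‖ ^ 2 : ℝ) : ℂ) * u t x + ((lam x : ℝ) : ℂ) * u t x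

/-- The conserved energy for the cubic NLS with potential. -/
def energyPotNLS (lam : ℝ → ℝ) (f : ℝ → ℂ) : ℝ :=
  (1/2) * (∫ x in (0:ℝ)..(2 * Real.pi), ‖deriv f x‖ ^ 2) +
    (1/4) * (∫ x in (0:ℝ)..(2 * Real.pi), ‖f x‖ ^ 4) +
    (1/2) * (∫ x in (0:ℝ)..(2 * Real.pi), lam x * ‖f x‖ ^ 2)

/-- `u` is a (global-in-time) solution of the cubic NLS with inhomogeneous nonlinearity
`i∂_t u + ∂_x² u = λ(x)|u|²u` on `S¹ × ℝ`. -/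
def IsSolutionInhomNLS (lam : ℝ → ℝ) (u : ℝ → ℝ → ℂ) : Prop :=
  (∀ t, Periodic2pi (u t)) ∧
  ∀ t x, Complex.I * deriv (fun t' => u t' x) t + deriv (deriv (u t)) x =
    ((lam x : ℝ) : ℂ) * ((‖u t x‖ ^ 2 : ℝ) : ℂ) * u t x

/-- The conserved energy for the cubic NLS with inhomogeneous nonlinearity. -/
def energyInhomNLS (lam : ℝ → ℝ) (f : ℝ → ℂ) : ℝ :=
  (1/2) * (∫ x in (0:ℝ)..(2 * Real.pi), ‖deriv f x‖ ^ 2) +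
    (1/4) * (∫ x in (0:ℝ)..(2 * Real.pi), lam x * ‖f x‖ ^ 4)

/-- The Hartree higher modified energy `E²(f) = E¹(f) + λ₄(Ψ;f)`. -/
def E2H (s N : ℝ) (V : ℝ → ℝ) (f : ℝ → ℂ) : ℂ :=
  (E1 s N f : ℂ) + lambda4 (PsiV s N V) f

/-- The Hartree higher modified energy with multiplier `cΨ`:
`E²(f) = E¹(f) + λ₄(cΨ;f)`. -/
def E2Hc (s N : ℝ) (V : ℝ → ℝ) (c : ℝ) (f : ℝ → ℂ) : ℂ :=
  (E1 s N f : ℂ) + lambda4 (fun a b c' d => (c : ℂ) * PsiV s N V a b c' d) f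

/-- The higher modified energy with multiplier `cΨ₂` for the cubic NLS with potential:
`E²(f) = E¹(f) + λ₄(cΨ₂;f)`. -/
def E2Pc (s N c : ℝ) (f : ℝ → ℂ) : ℂ :=
  (E1 s N f : ℂ) + lambda4 (fun a b c' d => (c : ℂ) * Psi2 s N a b c' d) f

end

/-! `θ²` is the power `2s ≥ 1` of the `1/N`-Lipschitz function `max 1 (x / N)`, so by the mean
value theorem it is Lipschitz on `x ≤ X` with constant `2 s θ(X)² / X`. Take `X = |n₁|` and pair
`(n₁, n₂)`, `(n₃, n₄)`, `(n₅, n₆)`: if the low frequencies are bounded by `m`, then `|n|` varies by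
at most `4m` in the first pair, because the alternating sum vanishes, and by at most `m` in the
others. Finally `|n₁| ≤ 5 |n₂|` turns `θ(n₁)²` into `θ(n₁) θ(n₂)`. -/

theorem abs_rpow_sub_rpow_le {p x y z : ℝ} (hp : 1 ≤ p) (hx : 0 ≤ x) (hxz : x ≤ z)
    (hy : 0 ≤ y) (hyz : y ≤ z) : |x ^ p - y ^ p| ≤ p * z ^ (p - 1) * |x - y| := by
  refine (convex_Icc 0 z).norm_image_sub_le_of_norm_hasDerivWithin_le
    (f' := fun t => p * t ^ (p - 1))
    (fun t _ => (Real.hasDerivAt_rpow_const (Or.inr hp)).hasDerivWithinAt)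
    (fun t ht => ?_) ⟨hy, hyz⟩ ⟨hx, hxz⟩
  have ht₀ : 0 ≤ t := ht.1
  rw [Real.norm_of_nonneg (by positivity)]
  exact mul_le_mul_of_nonneg_left (Real.rpow_le_rpow ht₀ ht.2 (by linarith)) (by linarith)

section thetaR

variable {s N x y : ℝ}

theorem thetaR_eq_max_rpow (hN : 0 < N) (x : ℝ) : thetaR s N x = max 1 (x / N) ^ s := by
  rw [thetaR]
  split_ifs with hx
  · rw [max_eq_right ((one_le_div hN).2 hx)]
  · rw [max_eq_left ((div_le_one hN).2 (not_le.1 hx).le), Real.one_rpow]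

theorem thetaR_pos (hN : 0 < N) (x : ℝ) : 0 < thetaR s N x := by
  rw [thetaR_eq_max_rpow hN]
  positivity

theorem thetaR_sq_eq_max_rpow (hN : 0 < N) (x : ℝ) :
    thetaR s N x ^ 2 = max 1 (x / N) ^ (2 * s) := by
  rw [thetaR_eq_max_rpow hN, ← Real.rpow_mul_natCast (by positivity), Nat.cast_two, mul_comm]

theorem thetaR_le_rpow_mul_thetaR {c : ℝ} (hs : 0 ≤ s) (hN : 0 < N) (hc : 1 ≤ c)
    (hxy : x ≤ c * y) : thetaR s N x ≤ c ^ s * thetaR s N y := by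
  have hmax : max 1 (x / N) ≤ c * max 1 (y / N) := by
    refine max_le (one_le_mul_of_one_le_of_one_le hc (le_max_left _ _)) ?_
    calc x / N ≤ c * (y / N) := by rw [← mul_div_assoc]; gcongr
      _ ≤ c * max 1 (y / N) := by gcongr; exact le_max_right _ _
  rw [thetaR_eq_max_rpow hN, thetaR_eq_max_rpow hN,
    ← Real.mul_rpow (by positivity) (by positivity)]
  exact Real.rpow_le_rpow (by positivity) hmax hs

theorem abs_thetaR_sq_sub_thetaR_sq_le {z : ℝ} (hs : 1 / 2 ≤ s) (hN : 0 < N) (hz : 0 < z)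
    (hxz : x ≤ z) (hyz : y ≤ z) :
    |thetaR s N x ^ 2 - thetaR s N y ^ 2| ≤ 2 * s * (|x - y| / z) * thetaR s N z ^ 2 := by
  have hmono {t : ℝ} (ht : t ≤ z) : max 1 (t / N) ≤ max 1 (z / N) := by gcongr
  have hlip : |max 1 (x / N) - max 1 (y / N)| ≤ |x - y| / z * max 1 (z / N) :=
    calc |max 1 (x / N) - max 1 (y / N)| ≤ |x / N - y / N| := by
          rw [max_comm 1, max_comm 1]; exact abs_max_sub_max_le_abs _ _ _
      _ = |x - y| / z * (z / N) := by
          rw [← sub_div, abs_div, abs_of_pos hN, div_mul_div_cancel₀ hz.ne']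
      _ ≤ |x - y| / z * max 1 (z / N) := by gcongr; exact le_max_right _ _
  have hpow : max 1 (z / N) ^ (2 * s) = max 1 (z / N) ^ (2 * s - 1) * max 1 (z / N) := by
    rw [← Real.rpow_add_one (by positivity), sub_add_cancel]
  simp only [thetaR_sq_eq_max_rpow hN]
  calc |max 1 (x / N) ^ (2 * s) - max 1 (y / N) ^ (2 * s)|
      ≤ 2 * s * max 1 (z / N) ^ (2 * s - 1) * |max 1 (x / N) - max 1 (y / N)| :=
        abs_rpow_sub_rpow_le (by linarith) (by positivity) (hmono hxz) (by positivity) (hmono hyz)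
    _ ≤ 2 * s * max 1 (z / N) ^ (2 * s - 1) * (|x - y| / z * max 1 (z / N)) := by gcongr
    _ = 2 * s * (|x - y| / z) * max 1 (z / N) ^ (2 * s) := by rw [hpow]; ring

end thetaR

theorem multiplier_cancellation_bound_general {s N m x₁ x₂ x₃ x₄ x₅ x₆ : ℝ} (hs : 1 / 2 ≤ s)
    (hN : 0 < N) (hsum : x₁ - x₂ + x₃ - x₄ + x₅ - x₆ = 0) (hx₁ : x₁ ≠ 0) (h₂ : |x₂| ≤ |x₁|)
    (h₃ : |x₃| ≤ |x₂|) (h₄ : |x₄| ≤ |x₂|) (h₅ : |x₅| ≤ |x₂|) (h₆ : |x₆| ≤ |x₂|)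
    (hm₃ : |x₃| ≤ m) (hm₄ : |x₄| ≤ m) (hm₅ : |x₅| ≤ m) (hm₆ : |x₆| ≤ m) :
    |thetaR s N |x₁| ^ 2 - thetaR s N |x₂| ^ 2 + thetaR s N |x₃| ^ 2 - thetaR s N |x₄| ^ 2 +
        thetaR s N |x₅| ^ 2 - thetaR s N |x₆| ^ 2| ≤
      12 * s * 5 ^ s * (m / |x₁|) * thetaR s N |x₁| * thetaR s N |x₂| := by
  have hx₁_pos : 0 < |x₁| := abs_pos.2 hx₁
  have hm : 0 ≤ m := (abs_nonneg x₃).trans hm₃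
  have htri : |x₁| ≤ |x₂| + |x₃| + |x₄| + |x₅| + |x₆| := by grind
  have hθ₁ : 0 < thetaR s N |x₁| := thetaR_pos hN _
  have hcomp : thetaR s N |x₁| ≤ 5 ^ s * thetaR s N |x₂| :=
    thetaR_le_rpow_mul_thetaR (by linarith) hN (by norm_num) (by linarith)
  have hpair {x y d : ℝ} (hx : |x| ≤ |x₁|) (hy : |y| ≤ |x₁|) (hd : |(|x| - |y|)| ≤ d) :
      |thetaR s N |x| ^ 2 - thetaR s N |y| ^ 2| ≤ 2 * s * (d / |x₁|) * thetaR s N |x₁| ^ 2 :=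
    (abs_thetaR_sq_sub_thetaR_sq_le hs hN hx₁_pos hx hy).trans (by gcongr)
  have hlow {x y : ℝ} (hx : |x| ≤ m) (hy : |y| ≤ m) : |(|x| - |y|)| ≤ m :=
    abs_sub_le_of_nonneg_of_le (abs_nonneg x) hx (abs_nonneg y) hy
  have hhigh : |(|x₁| - |x₂|)| ≤ 4 * m := by
    rw [abs_of_nonneg (sub_nonneg.2 h₂)]
    linarith
  have h₁₂ := hpair le_rfl h₂ hhigh
  have h₃₄ := hpair (h₃.trans h₂) (h₄.trans h₂) (hlow hm₃ hm₄)
  have h₅₆ := hpair (h₅.trans h₂) (h₆.trans h₂) (hlow hm₅ hm₆)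
  calc _ ≤ 2 * s * (4 * m / |x₁|) * thetaR s N |x₁| ^ 2 +
          2 * s * (m / |x₁|) * thetaR s N |x₁| ^ 2 + 2 * s * (m / |x₁|) * thetaR s N |x₁| ^ 2 := by
        rw [abs_le] at h₁₂ h₃₄ h₅₆ ⊢
        constructor <;> linarith
    _ = 12 * s * (m / |x₁|) * thetaR s N |x₁| * thetaR s N |x₁| := by ring
    _ ≤ 12 * s * (m / |x₁|) * thetaR s N |x₁| * (5 ^ s * thetaR s N |x₂|) := by gcongr
    _ = 12 * s * 5 ^ s * (m / |x₁|) * thetaR s N |x₁| * thetaR s N |x₂| := by ring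

/-- the multiplier cancellation bound `M₆ = O(N₁^{-1/2}θ(n₁)θ(n₂))`: if
`n₁-n₂+n₃-n₄+n₅-n₆ = 0`, `|n₁| ≥ ⋯ ≥ |n₆|`, `n₁ ≠ 0` and `|n_j| ≤ |n₁|^{1/2}` for
`j = 3,4,5,6`, then the alternating sum of `θ(n_j)²` is `≤ C|n₁|^{-1/2}θ(n₁)θ(n₂)`. -/
theorem multiplier_cancellation_bound (s : ℝ) (hs : 1 ≤ s) :
    ∃ C : ℝ, 0 < C ∧ ∀ N : ℝ, 1 < N → ∀ n₁ n₂ n₃ n₄ n₅ n₆ : ℤ,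
      n₁ - n₂ + n₃ - n₄ + n₅ - n₆ = 0 →
      |n₂| ≤ |n₁| → |n₃| ≤ |n₂| → |n₄| ≤ |n₃| → |n₅| ≤ |n₄| → |n₆| ≤ |n₅| →
      n₁ ≠ 0 →
      |(n₃ : ℝ)| ≤ |(n₁ : ℝ)| ^ (1/2 : ℝ) → |(n₄ : ℝ)| ≤ |(n₁ : ℝ)| ^ (1/2 : ℝ) →
      |(n₅ : ℝ)| ≤ |(n₁ : ℝ)| ^ (1/2 : ℝ) → |(n₆ : ℝ)| ≤ |(n₁ : ℝ)| ^ (1/2 : ℝ) →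
      |(thetaZ s N n₁) ^ 2 - (thetaZ s N n₂) ^ 2 + (thetaZ s N n₃) ^ 2 - (thetaZ s N n₄) ^ 2 +
          (thetaZ s N n₅) ^ 2 - (thetaZ s N n₆) ^ 2| ≤
        C * |(n₁ : ℝ)| ^ (-(1/2) : ℝ) * thetaZ s N n₁ * thetaZ s N n₂ := by
  have : 0 < s := by linarith
  refine ⟨12 * s * 5 ^ s, by positivity,
    fun N hN n₁ n₂ n₃ n₄ n₅ n₆ hsum h₂ h₃ h₄ h₅ h₆ hn₁ hm₃ hm₄ hm₅ hm₆ => ?_⟩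
  rify at hsum h₂ h₃ h₄ h₅ h₆ hn₁
  rw [show (-(1/2) : ℝ) = 1/2 - 1 by norm_num, Real.rpow_sub_one (abs_ne_zero.2 hn₁)]
  exact multiplier_cancellation_bound_general (by linarith) (by linarith) hsum hn₁ h₂ h₃
    (h₄.trans h₃) (h₅.trans (h₄.trans h₃)) (h₆.trans (h₅.trans (h₄.trans h₃))) hm₃ hm₄ hm₅ hm₆
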